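/- arXiv:2005.01915 — 2 statements merged into one kernel-verified Lean document; each statement's English description precedes it below -/
import Mathlib

section
/- The set $\{1, \theta, \theta^2, \theta^3, \theta^4, \frac{\theta^5}{5}, \frac{\theta^6}{5}, \frac{\theta^7}{5}, \frac{\theta^8}{5}, \frac{\theta^9}{5}\}$ is an integral basis of $K = \mathbb{Q}(\theta)$, where $\theta$ is a root of $x^{10} - 150$. -/
open Polynomial

namespace PureTenth

variable {K : Type*} [Field K] [Algebra ℚ K]

/-- An integer which is `5` times an algebraic integer is divisible by `5`. -/
lemma five_dvd [CharZero K] (n : ℤ) (δ : K) (hδ : IsIntegral ℤ δ) (h : (n : K) = 5 * δ) :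
    (5 : ℤ) ∣ n := by
  have h1 : δ = algebraMap ℚ K ((n : ℚ) / 5) := by
    rw [map_div₀]
    simp only [map_intCast, map_ofNat]
    rw [h]; field_simp
  rw [h1] at hδ
  have h2 : IsIntegral ℤ ((n : ℚ) / 5) :=
    (isIntegral_algebraMap_iff (algebraMap ℚ K).injective).1 hδ
  obtain ⟨m, hm⟩ := IsIntegrallyClosed.isIntegral_iff.1 h2
  refine ⟨m, ?_⟩
  have h3 : (m : ℚ) = n / 5 := by simpa using hm
  have : (n : ℚ) = 5 * m := by rw [h3]; field_simp
  exact_mod_cast this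

/-- The key descent step at the prime `5`. -/
lemma key [CharZero K] (σ : K →ₐ[ℚ] K) (θ w : K) (hσ : σ w = -w) (hθ : θ ^ 10 = 150)
    (hw : w ^ 2 = 6) (hwi : IsIntegral ℤ w) (a b : ℤ) (γ : K) (hγ : IsIntegral ℤ γ)
    (h : ((a : K) + b * w) * θ ^ 4 = 5 * γ) : (5 : ℤ) ∣ a ∧ (5 : ℤ) ∣ b := by
  have p5 : Prime (5 : ℤ) := by norm_num
  obtain ⟨A, hA⟩ : ∃ A : ℤ, A = a ^ 5 + 60 * a ^ 3 * b ^ 2 + 180 * a * b ^ 4 := ⟨_, rfl⟩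
  obtain ⟨B, hB⟩ : ∃ B : ℤ, B = 5 * a ^ 4 * b + 60 * a ^ 2 * b ^ 3 + 36 * b ^ 5 := ⟨_, rfl⟩
  have e1 : ((a : K) + b * w) ^ 5 = A + B * w := by
    rw [hA, hB]; push_cast
    linear_combination (10 * (a : K) ^ 3 * b ^ 2 + 10 * a ^ 2 * b ^ 3 * w
      + 5 * a * b ^ 4 * (w ^ 2 + 6) + b ^ 5 * w * (w ^ 2 + 6)) * hw
  have e2 : (36 : K) * (A + B * w) = 5 * γ ^ 5 := by
    have h20 : θ ^ 20 = 22500 := by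
      calc θ ^ 20 = (θ ^ 10) ^ 2 := by ring
        _ = 22500 := by rw [hθ]; norm_num
    have h5 : ((a : K) + b * w) ^ 5 * θ ^ 20 = 3125 * γ ^ 5 := by
      calc ((a : K) + b * w) ^ 5 * θ ^ 20 = (((a : K) + b * w) * θ ^ 4) ^ 5 := by ring
        _ = 3125 * γ ^ 5 := by rw [h]; ring
    rw [e1, h20] at h5
    linear_combination h5 / 625
  have e3 : (36 : K) * (A - B * w) = 5 * (σ γ) ^ 5 := by
    have := congrArg σ e2
    simp only [map_mul, map_add, map_pow, map_ofNat, map_intCast, hσ] at this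
    rw [← this]; ring
  have hγ' : IsIntegral ℤ (σ γ) := hγ.map (σ.restrictScalars ℤ)
  have dA : (5 : ℤ) ∣ 72 * A := by
    refine five_dvd (K := K) _ (γ ^ 5 + (σ γ) ^ 5) ((hγ.pow 5).add (hγ'.pow 5)) ?_
    push_cast
    linear_combination e2 + e3
  have dB : (5 : ℤ) ∣ 31104 * B ^ 2 := by
    refine five_dvd (K := K) _ (5 * (γ ^ 5 - (σ γ) ^ 5) ^ 2) ?_ ?_
    · have : IsIntegral ℤ (5 : K) := by
        simpa using (isIntegral_algebraMap (R := ℤ) (A := K) (x := 5))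
      exact this.mul (((hγ.pow 5).sub (hγ'.pow 5)).pow 2)
    · push_cast
      have e4 : 72 * B * w = 5 * (γ ^ 5 - (σ γ) ^ 5) := by linear_combination e2 - e3
      have e5 := congrArg (fun x => x ^ 2) e4
      linear_combination e5 - 5184 * (B : K) ^ 2 * hw
  have ha : (5 : ℤ) ∣ a := by
    have : (5 : ℤ) ∣ A := by omega
    have h5 : (5 : ℤ) ∣ a ^ 5 := by
      have : a ^ 5 = A - 5 * (12 * a ^ 3 * b ^ 2 + 36 * a * b ^ 4) := by rw [hA]; ring
      rw [this]; omega
    exact p5.dvd_of_dvd_pow h5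
  have hb : (5 : ℤ) ∣ b := by
    have h0 : (5 : ℤ) ∣ B ^ 2 := by omega
    have : (5 : ℤ) ∣ B := p5.dvd_of_dvd_pow h0
    have h5 : (5 : ℤ) ∣ b ^ 5 := by
      have : 36 * b ^ 5 = B - 5 * (a ^ 4 * b + 12 * a ^ 2 * b ^ 3) := by rw [hB]; ring
      omega
    exact p5.dvd_of_dvd_pow h5
  exact ⟨ha, hb⟩

/-- Explicit membership in the span. -/
def Mem (θ w x : K) : Prop :=
  ∃ a0 a1 a2 a3 a4 b0 b1 b2 b3 b4 : ℤ,
    x = (a0 + b0 * w) + (a1 + b1 * w) * θ + (a2 + b2 * w) * θ ^ 2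
      + (a3 + b3 * w) * θ ^ 3 + (a4 + b4 * w) * θ ^ 4

lemma Mem.add {θ w x y : K} (hx : Mem θ w x) (hy : Mem θ w y) : Mem θ w (x + y) := by
  obtain ⟨a0, a1, a2, a3, a4, b0, b1, b2, b3, b4, rfl⟩ := hx
  obtain ⟨c0, c1, c2, c3, c4, d0, d1, d2, d3, d4, rfl⟩ := hy
  refine ⟨a0 + c0, a1 + c1, a2 + c2, a3 + c3, a4 + c4, b0 + d0, b1 + d1, b2 + d2, b3 + d3,
    b4 + d4, ?_⟩
  push_cast; ring

lemma Mem.mul_theta {θ w x : K} (h5 : θ ^ 5 = 5 * w) (hw : w ^ 2 = 6) (hx : Mem θ w x) :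
    Mem θ w (x * θ) := by
  obtain ⟨a0, a1, a2, a3, a4, b0, b1, b2, b3, b4, rfl⟩ := hx
  refine ⟨30 * b4, a0, a1, a2, a3, 5 * a4, b0, b1, b2, b3, ?_⟩
  push_cast
  linear_combination (a4 + b4 * w : K) * h5 + 5 * (b4 : K) * hw

lemma mem_of_adjoin {θ w : K} (h5 : θ ^ 5 = 5 * w) (hw : w ^ 2 = 6) {x : K}
    (hx : x ∈ Algebra.adjoin ℤ ({θ} : Set K)) : Mem θ w x := by
  rw [Algebra.adjoin_singleton_eq_range_aeval] at hx
  obtain ⟨p, rfl⟩ := hx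
  show Mem θ w (aeval θ p)
  induction p using Polynomial.induction_on with
  | C a => exact ⟨a, 0, 0, 0, 0, 0, 0, 0, 0, 0, by simp⟩
  | add p q hp hq => rw [map_add]; exact hp.add hq
  | monomial n a ih =>
    have := ih.mul_theta h5 hw
    convert this using 1
    simp [pow_succ, mul_assoc]

lemma Mem.isIntegral {θ w x : K} (hθ : IsIntegral ℤ θ) (hw : IsIntegral ℤ w) (hx : Mem θ w x) :
    IsIntegral ℤ x := by
  obtain ⟨a0, a1, a2, a3, a4, b0, b1, b2, b3, b4, rfl⟩ := hx
  have hz : ∀ n : ℤ, IsIntegral ℤ (n : K) := fun n => by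
    simpa using (isIntegral_algebraMap (R := ℤ) (A := K) (x := n))
  have hl : ∀ a b : ℤ, IsIntegral ℤ ((a : K) + b * w) := fun a b => (hz a).add ((hz b).mul hw)
  exact ((((hl _ _).add ((hl _ _).mul hθ)).add ((hl _ _).mul (hθ.pow 2))).add
    ((hl _ _).mul (hθ.pow 3))).add ((hl _ _).mul (hθ.pow 4))

lemma descent [CharZero K] (σ : K →ₐ[ℚ] K) (θ w : K) (hσ : σ w = -w) (hθ : θ ^ 10 = 150)
    (h5 : θ ^ 5 = 5 * w)
    (hw : w ^ 2 = 6) (hwi : IsIntegral ℤ w) (hti : IsIntegral ℤ θ) (α : K) (hα : IsIntegral ℤ α)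
    (h : Mem θ w (5 * α)) : Mem θ w α := by
  have hz : ∀ n : ℤ, IsIntegral ℤ (n : K) := fun n => by
    simpa using (isIntegral_algebraMap (R := ℤ) (A := K) (x := n))
  have hl : ∀ a b : ℤ, IsIntegral ℤ ((a : K) + b * w) := fun a b => (hz a).add ((hz b).mul hwi)
  obtain ⟨a0, a1, a2, a3, a4, b0, b1, b2, b3, b4, h⟩ := h
  obtain ⟨⟨a0, rfl⟩, ⟨b0, rfl⟩⟩ := key σ θ w hσ hθ hw hwi a0 b0
    (α * θ ^ 4 - w * ((a1 + b1 * w) + (a2 + b2 * w) * θ + (a3 + b3 * w) * θ ^ 2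
      + (a4 + b4 * w) * θ ^ 3))
    ((hα.mul (hti.pow 4)).sub (hwi.mul ((((hl _ _).add ((hl _ _).mul hti)).add
      ((hl _ _).mul (hti.pow 2))).add ((hl _ _).mul (hti.pow 3)))))
    (by linear_combination (-θ ^ 4) * h - ((a1 + b1 * w) + (a2 + b2 * w) * θ
      + (a3 + b3 * w) * θ ^ 2 + (a4 + b4 * w) * θ ^ 3) * h5)
  push_cast at h
  obtain ⟨⟨a1, rfl⟩, ⟨b1, rfl⟩⟩ := key σ θ w hσ hθ hw hwi a1 b1
    (α * θ ^ 3 - (a0 + b0 * w) * θ ^ 3 - w * ((a2 + b2 * w) + (a3 + b3 * w) * θ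
      + (a4 + b4 * w) * θ ^ 2))
    (((hα.mul (hti.pow 3)).sub ((hl _ _).mul (hti.pow 3))).sub (hwi.mul (((hl _ _).add
      ((hl _ _).mul hti)).add ((hl _ _).mul (hti.pow 2)))))
    (by linear_combination (-θ ^ 3) * h - ((a2 + b2 * w)
      + (a3 + b3 * w) * θ + (a4 + b4 * w) * θ ^ 2) * h5)
  push_cast at h
  obtain ⟨⟨a2, rfl⟩, ⟨b2, rfl⟩⟩ := key σ θ w hσ hθ hw hwi a2 b2
    (α * θ ^ 2 - (a0 + b0 * w) * θ ^ 2 - (a1 + b1 * w) * θ ^ 3 - w * ((a3 + b3 * w)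
      + (a4 + b4 * w) * θ))
    ((((hα.mul (hti.pow 2)).sub ((hl _ _).mul (hti.pow 2))).sub
      ((hl _ _).mul (hti.pow 3))).sub (hwi.mul ((hl _ _).add ((hl _ _).mul hti))))
    (by linear_combination (-θ ^ 2) * h - ((a3 + b3 * w) + (a4 + b4 * w) * θ) * h5)
  push_cast at h
  obtain ⟨⟨a3, rfl⟩, ⟨b3, rfl⟩⟩ := key σ θ w hσ hθ hw hwi a3 b3
    (α * θ - (a0 + b0 * w) * θ - (a1 + b1 * w) * θ ^ 2 - (a2 + b2 * w) * θ ^ 3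
      - w * (a4 + b4 * w))
    (((((hα.mul hti).sub ((hl _ _).mul hti)).sub
      ((hl _ _).mul (hti.pow 2))).sub ((hl _ _).mul (hti.pow 3))).sub (hwi.mul (hl _ _)))
    (by linear_combination (-θ) * h - (a4 + b4 * w) * h5)
  push_cast at h
  obtain ⟨⟨a4, rfl⟩, ⟨b4, rfl⟩⟩ := key σ θ w hσ hθ hw hwi a4 b4
    (α - (a0 + b0 * w) - (a1 + b1 * w) * θ - (a2 + b2 * w) * θ ^ 2 - (a3 + b3 * w) * θ ^ 3)
    ((((hα.sub (hl _ _)).sub ((hl _ _).mul hti)).sub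
      ((hl _ _).mul (hti.pow 2))).sub ((hl _ _).mul (hti.pow 3)))
    (by linear_combination -h)
  push_cast at h
  refine ⟨a0, a1, a2, a3, a4, b0, b1, b2, b3, b4, ?_⟩
  linear_combination h / 5

lemma descent_pow [CharZero K] (σ : K →ₐ[ℚ] K) (θ w : K) (hσ : σ w = -w) (hθ : θ ^ 10 = 150)
    (h5 : θ ^ 5 = 5 * w)
    (hw : w ^ 2 = 6) (hwi : IsIntegral ℤ w) (hti : IsIntegral ℤ θ) (n : ℕ) (α : K)
    (hα : IsIntegral ℤ α) (h : Mem θ w (5 ^ n * α)) : Mem θ w α := by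
  induction n with
  | zero => simpa using h
  | succ n ih =>
    apply ih
    refine descent σ θ w hσ hθ h5 hw hwi hti _ ?_ ?_
    · have : IsIntegral ℤ (5 : K) := by
        simpa using (isIntegral_algebraMap (R := ℤ) (A := K) (x := 5))
      exact (this.pow n).mul hα
    · convert h using 1; ring

end PureTenth

open PureTenth in
/-- Some `5 ^ n` multiple of any algebraic integer lies in `ℤ[θ]`. -/
lemma PureTenth.exists_pow {K : Type*} [Field K] [Algebra ℚ K] (B : PowerBasis ℚ K)
    (hB : B.gen ^ 10 = 150) (hti : IsIntegral ℤ B.gen)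
    (hmin : minpoly ℚ B.gen = X ^ 10 - C 150) (α : K) (hα : IsIntegral ℤ α) :
    ∃ n : ℕ, (5 : K) ^ n * α ∈ Algebra.adjoin ℤ ({B.gen} : Set K) := by
  have : CharZero K := algebraRat.charZero K
  have : FiniteDimensional ℚ K := B.finite
  have hminZ : minpoly ℤ B.gen = X ^ 10 - C 150 := by
    apply Polynomial.map_injective (algebraMap ℤ ℚ) (algebraMap ℤ ℚ).injective_int
    rw [← minpoly.isIntegrallyClosed_eq_field_fractions' ℚ hti, hmin]
    simp only [Polynomial.map_sub, Polynomial.map_pow, map_X, map_C]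
    norm_num
  have hdeg : B.dim = 10 := by
    rw [← B.natDegree_minpoly, hmin]; exact natDegree_X_pow_sub_C
  have hei : ∀ p : ℤ, Prime p → p ∣ 150 → ¬ p ^ 2 ∣ 150 →
      (minpoly ℤ B.gen).IsEisensteinAt (Submodule.span ℤ {p}) := by
    intro p hp h1 h2
    rw [hminZ]
    refine (monic_X_pow_sub_C (150 : ℤ) (by norm_num)).isEisensteinAt_of_mem_of_notMem ?_ ?_ ?_
    · exact (Ideal.span_singleton_prime hp.ne_zero).2 hp |>.ne_top
    · intro n hn
      rw [natDegree_X_pow_sub_C] at hn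
      rw [coeff_sub, coeff_X_pow, if_neg hn.ne, coeff_C]
      split_ifs
      · simpa using (Ideal.mem_span_singleton.2 h1)
      · simp
    · change _ ∉ (Ideal.span {p}) ^ 2
      rw [Ideal.span_singleton_pow, Ideal.mem_span_singleton]
      simpa [coeff_X_pow, dvd_neg] using h2
  have hnorm : Algebra.norm ℚ B.gen = -150 := by
    rw [Algebra.PowerBasis.norm_gen_eq_coeff_zero_minpoly B, hmin, hdeg]
    simp [coeff_X_pow]
    norm_num
  obtain ⟨s, hs, hd⟩ : ∃ s : ℤ, IsUnit s ∧ Algebra.discr ℚ B.basis = s * (10 ^ 10 * 150 ^ 9) := by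
    rw [Algebra.discr_powerBasis_eq_norm, hmin]
    have : aeval B.gen (derivative (X ^ 10 - C 150 : ℚ[X])) =
        algebraMap ℚ K 10 * B.gen ^ 9 := by
      simp only [derivative_sub, derivative_X_pow, derivative_C, map_sub, map_mul, aeval_C,
        map_pow, aeval_X, map_zero, sub_zero]
      norm_num
    rw [this, map_mul, map_pow, hnorm, Algebra.norm_algebraMap, B.finrank, hdeg]
    refine ⟨1, by norm_num, ?_⟩
    norm_num
  have h1 := Algebra.discr_mul_isIntegral_mem_adjoin ℚ hti hα
  rw [hd] at h1
  have hsK : ((s : K) * s) = 1 := by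
    rcases Int.isUnit_iff.1 hs with rfl | rfl <;> simp
  have h2 : (2 : ℤ) ^ 19 • ((3 : ℤ) ^ 9 • ((5 : K) ^ 28 * α)) ∈
      Algebra.adjoin ℤ ({B.gen} : Set K) := by
    have h3 := Subalgebra.smul_mem _ h1 s
    convert h3 using 1
    rw [zsmul_eq_mul, zsmul_eq_mul, zsmul_eq_mul, Algebra.smul_def]
    simp only [map_mul, map_pow, map_ofNat, map_intCast]
    push_cast
    linear_combination (-(10 ^ 10 * 150 ^ 9 : K) * α) * hsK
  have i5 : IsIntegral ℤ ((5 : K) ^ 28 * α) := by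
    have : IsIntegral ℤ (5 : K) := by
      simpa using (isIntegral_algebraMap (R := ℤ) (A := K) (x := 5))
    exact (this.pow _).mul hα
  have h4 := mem_adjoin_of_smul_prime_pow_smul_of_minpoly_isEisensteinAt (p := (2 : ℤ))
    Int.prime_two hti (i5.smul _) h2
    (hei 2 Int.prime_two (by norm_num) (by norm_num))
  have h5 := mem_adjoin_of_smul_prime_pow_smul_of_minpoly_isEisensteinAt (p := (3 : ℤ))
    Int.prime_three hti i5 h4
    (hei 3 Int.prime_three (by norm_num) (by norm_num))
  exact ⟨28, h5⟩

open Polynomial in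
theorem integral_basis_pure_tenth (K : Type*) [Field K] [Algebra ℚ K]
    (θ : K) (hθ : θ ^ 10 = 150)
    (hirr : Irreducible ((X : ℚ[X]) ^ 10 - C (150 : ℚ)))
    (hgen : Algebra.adjoin ℚ ({θ} : Set K) = ⊤) :
    LinearIndependent ℤ
        ![(1 : K), θ, θ ^ 2, θ ^ 3, θ ^ 4,
          θ ^ 5 / 5, θ ^ 6 / 5, θ ^ 7 / 5, θ ^ 8 / 5, θ ^ 9 / 5] ∧
      Submodule.span ℤ
          (Set.range ![(1 : K), θ, θ ^ 2, θ ^ 3, θ ^ 4,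
            θ ^ 5 / 5, θ ^ 6 / 5, θ ^ 7 / 5, θ ^ 8 / 5, θ ^ 9 / 5]) =
        Subalgebra.toSubmodule (integralClosure ℤ K) := by
  have : CharZero K := algebraRat.charZero K
  have hmin : minpoly ℚ θ = X ^ 10 - C 150 := by
    refine (minpoly.eq_of_irreducible_of_monic hirr ?_ (monic_X_pow_sub_C _ (by norm_num))).symm
    simp [hθ]
  have htQ : IsIntegral ℚ θ :=
    ⟨X ^ 10 - C 150, monic_X_pow_sub_C _ (by norm_num), by simp [hθ]⟩
  have hti : IsIntegral ℤ θ :=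
    ⟨X ^ 10 - C 150, monic_X_pow_sub_C _ (by norm_num), by simp [hθ]⟩
  obtain ⟨w, hwdef⟩ : ∃ w : K, w = θ ^ 5 / 5 := ⟨_, rfl⟩
  have h5 : θ ^ 5 = 5 * w := by rw [hwdef]; field_simp
  have hw : w ^ 2 = 6 := by
    rw [hwdef]; linear_combination hθ / 25
  have hwi : IsIntegral ℤ w :=
    ⟨X ^ 2 - C 6, monic_X_pow_sub_C _ (by norm_num), by simp [hw]⟩
  obtain ⟨B, hBg⟩ : ∃ B : PowerBasis ℚ K, B.gen = θ :=
    ⟨PowerBasis.ofAdjoinEqTop htQ hgen, by simp⟩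
  obtain ⟨σ, hσ⟩ : ∃ σ : K →ₐ[ℚ] K, σ θ = -θ := by
    refine ⟨B.lift (-θ) ?_, ?_⟩
    · rw [hBg, hmin]
      simp [Even.neg_pow (by decide : Even 10), hθ]
    · have := B.lift_gen (-θ) (by
        rw [hBg, hmin]
        simp [Even.neg_pow (by decide : Even 10), hθ])
      exact (congrArg _ hBg.symm).trans this
  have hσw : σ w = -w := by
    rw [hwdef]; simp only [map_div₀, map_pow, hσ, map_ofNat]; ring
  have hmem : ∀ x : K, PureTenth.Mem θ w x ↔ IsIntegral ℤ x := by
    intro x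
    refine ⟨fun h => h.isIntegral hti hwi, fun h => ?_⟩
    obtain ⟨n, hn⟩ := PureTenth.exists_pow B (by rw [hBg, hθ]) (by rwa [hBg]) (by rw [hBg, hmin]) x h
    rw [hBg] at hn
    exact PureTenth.descent_pow σ θ w hσw hθ h5 hw hwi hti n x h (PureTenth.mem_of_adjoin h5 hw hn)
  constructor
  · rw [Fintype.linearIndependent_iff]
    intro g hg
    have hli := linearIndependent_pow (K := ℚ) θ
    have hnd : (minpoly ℚ θ).natDegree = 10 := by rw [hmin]; exact natDegree_X_pow_sub_C
    rw [hnd, Fintype.linearIndependent_iff] at hli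
    have := hli ![(g 0 : ℚ), g 1, g 2, g 3, g 4, g 5 / 5, g 6 / 5, g 7 / 5, g 8 / 5, g 9 / 5] (by
      rw [← hg]
      simp [Fin.sum_univ_succ, Algebra.smul_def]
      ring)
    intro i
    have hi := this i
    fin_cases i <;> simpa using hi
  · ext x
    rw [Subalgebra.mem_toSubmodule, mem_integralClosure_iff, ← hmem,
      Submodule.mem_span_range_iff_exists_fun]
    constructor
    · rintro ⟨c, rfl⟩
      refine ⟨c 0, c 1, c 2, c 3, c 4, c 5, c 6, c 7, c 8, c 9, ?_⟩
      rw [hwdef]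
      simp [Fin.sum_univ_succ]
      ring
    · rintro ⟨a0, a1, a2, a3, a4, b0, b1, b2, b3, b4, rfl⟩
      refine ⟨![a0, a1, a2, a3, a4, b0, b1, b2, b3, b4], ?_⟩
      rw [hwdef]
      simp [Fin.sum_univ_succ]
      ring
end

section
/- The set $\{1, \theta, \theta^2, \frac{\theta^3+1}{2}, \frac{\theta^4 - 2\theta^2 + 3\theta - 2}{6}, \frac{\theta^5 - 2\theta^3 + 3\theta^2 - 2\theta}{6}\}$ is an integral basis of $K = \mathbb{Q}(\theta)$, where $\theta$ is a root of $x^6 - 37$. -/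
open Polynomial in
lemma exists_pow_basis (K : Type*) [Field K] [Algebra ℚ K]
    (θ : K) (hθ : θ ^ 6 = 37)
    (hirr : Irreducible ((X : ℚ[X]) ^ 6 - C (37 : ℚ)))
    (hgen : Algebra.adjoin ℚ ({θ} : Set K) = ⊤) :
    ∃ b : Module.Basis (Fin 6) ℚ K, ∀ i, b i = θ ^ (i : ℕ) := by
  have hm : ((X : ℚ[X]) ^ 6 - C (37 : ℚ)).Monic := monic_X_pow_sub_C _ (by norm_num)
  have hmin : minpoly ℚ θ = (X : ℚ[X]) ^ 6 - C (37 : ℚ) := by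
    symm
    apply minpoly.eq_of_irreducible_of_monic hirr _ hm
    simp [hθ]
  have hint : IsIntegral ℚ θ := ⟨_, hm, by simp [hθ]⟩
  let pb := PowerBasis.ofAdjoinEqTop hint hgen
  have hdim : pb.dim = 6 := by
    simp only [pb, PowerBasis.ofAdjoinEqTop_dim, hmin]
    exact natDegree_X_pow_sub_C
  refine ⟨pb.basis.reindex (finCongr hdim), fun i => ?_⟩
  rw [Module.Basis.reindex_apply, PowerBasis.coe_basis]
  simp [pb]
  rfl

lemma trace_formula {K : Type*} [Field K] [Algebra ℚ K]
    (θ : K) (hθ : θ ^ 6 = 37) (b : Module.Basis (Fin 6) ℚ K) (hb : ∀ i, b i = θ ^ (i : ℕ))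
    (a0 a1 a2 a3 a4 a5 : ℚ) :
    Algebra.trace ℚ K (a0 • 1 + a1 • θ + a2 • θ ^ 2 + a3 • θ ^ 3 + a4 • θ ^ 4 + a5 • θ ^ 5)
      = 6 * a0 := by
  have hK : CharZero K := algebraRat.charZero K
  have key : ∀ (x : K) (c : Fin 6 → ℚ), x = ∑ i, c i • b i → ∀ i, b.repr x i = c i := by
    intro x c h i
    rw [h, Module.Basis.repr_sum_self]
  rw [Algebra.trace_eq_matrix_trace b]
  simp only [Matrix.trace, Matrix.diag, Algebra.leftMulMatrix_eq_repr_mul, Fin.sum_univ_six]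
  rw [key _ ![a0, a1, a2, a3, a4, a5] (by
      simp [hb, Fin.sum_univ_six])]
  rw [key _ ![37*a5, a0, a1, a2, a3, a4] (by
      simp [hb, Fin.sum_univ_six, Algebra.smul_def]; linear_combination ((a5 : K)) * hθ)]
  rw [key _ ![37*a4, 37*a5, a0, a1, a2, a3] (by
      simp [hb, Fin.sum_univ_six, Algebra.smul_def]; linear_combination ((a4 : K)+a5*θ) * hθ)]
  rw [key _ ![37*a3, 37*a4, 37*a5, a0, a1, a2] (by
      simp [hb, Fin.sum_univ_six, Algebra.smul_def]; linear_combination ((a3 : K)+a4*θ+a5*θ^2) * hθ)]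
  rw [key _ ![37*a2, 37*a3, 37*a4, 37*a5, a0, a1] (by
      simp [hb, Fin.sum_univ_six, Algebra.smul_def]; linear_combination ((a2 : K)+a3*θ+a4*θ^2+a5*θ^3) * hθ)]
  rw [key _ ![37*a1, 37*a2, 37*a3, 37*a4, 37*a5, a0] (by
      simp [hb, Fin.sum_univ_six, Algebra.smul_def]; linear_combination ((a1 : K)+a2*θ+a3*θ^2+a4*θ^3+a5*θ^4) * hθ)]
  simp
  ring

lemma trace_int {K : Type*} [Field K] [Algebra ℚ K]
    (θ : K) (hθ : θ ^ 6 = 37) (b : Module.Basis (Fin 6) ℚ K) (hb : ∀ i, b i = θ ^ (i : ℕ))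
    (z : K) (hz : IsIntegral ℤ z)
    (a0 a1 a2 a3 a4 a5 : ℚ) 
    (h : z = (a0 : K) + a1 * θ + a2 * θ ^ 2 + a3 * θ ^ 3 + a4 * θ ^ 4 + a5 * θ ^ 5) :
    ∃ n : ℤ, 6 * a0 = n := by
  have hK : CharZero K := algebraRat.charZero K
  have : Module.Finite ℚ K := Module.Finite.of_basis b
  have h1 := trace_formula θ hθ b hb a0 a1 a2 a3 a4 a5
  have h2 : z = (a0 • 1 + a1 • θ + a2 • θ ^ 2 + a3 • θ ^ 3 + a4 • θ ^ 4 + a5 • θ ^ 5) := by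
    simp [h, Algebra.smul_def]
  rw [← h2] at h1
  have h3 : IsIntegral ℤ (Algebra.trace ℚ K z) := Algebra.isIntegral_trace hz
  obtain ⟨n, hn⟩ := IsIntegrallyClosed.isIntegral_iff.mp h3
  exact ⟨n, by rw [← h1, ← hn]; simp⟩

lemma step37 {K : Type*} [Field K] [Algebra ℚ K]
    (θ : K) (hθ : θ ^ 6 = 37) (m : ℤ) (h : IsIntegral ℤ ((m : K) * θ ^ 5 / 37)) :
    ∃ k : ℤ, m = 37 * k := by
  have hK : CharZero K := algebraRat.charZero K
  have h1 := h.pow 6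
  have h2 : ((m : K) * θ ^ 5 / 37) ^ 6 = algebraMap ℚ K ((m : ℚ) ^ 6 / 37) := by
    simp
    have : θ ^ 30 = 37 ^ 5 := by rw [← hθ]; ring
    field_simp
    linear_combination (m : K) ^ 6 * this
  rw [h2, isIntegral_algebraMap_iff (algebraMap ℚ K).injective] at h1
  obtain ⟨n, hn⟩ := IsIntegrallyClosed.isIntegral_iff.mp h1
  have h4 : m ^ 6 = 37 * n := by
    have : (m : ℚ) ^ 6 = 37 * n := by
      have : (n : ℚ) = (m : ℚ) ^ 6 / 37 := by simpa using hn
      rw [this]; ring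
    exact_mod_cast this
  exact (Int.Prime.dvd_pow' (p := 37) (by norm_num) ⟨n, h4⟩)

lemma isInt_int {K : Type*} [Field K] (n : ℤ) : IsIntegral ℤ (n : K) := by
  simpa using isIntegral_algebraMap (R := ℤ) (A := K) (x := n)

lemma isInt_of_eq {K : Type*} [Field K] {x y : K} (h : IsIntegral ℤ x) (e : y = x) :
    IsIntegral ℤ y := e ▸ h

lemma isInt_theta {K : Type*} [Field K] (θ : K) (hθ : θ ^ 6 = 37) : IsIntegral ℤ θ := by
  apply IsIntegral.of_pow (n := 6) (by norm_num)
  rw [hθ]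
  exact_mod_cast isInt_int (K := K) 37

lemma isInt_poly {K : Type*} [Field K] (θ : K) (hθ : θ ^ 6 = 37) (c0 c1 c2 c3 c4 c5 : ℤ) :
    IsIntegral ℤ ((c0 : K) + c1 * θ + c2 * θ ^ 2 + c3 * θ ^ 3 + c4 * θ ^ 4 + c5 * θ ^ 5) := by
  have h := isInt_theta θ hθ
  have hi := fun n : ℤ => isInt_int (K := K) n
  exact (((((hi c0).add ((hi c1).mul h)).add ((hi c2).mul (h.pow 2))).add
    ((hi c3).mul (h.pow 3))).add ((hi c4).mul (h.pow 4))).add ((hi c5).mul (h.pow 5))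

lemma isInt_b3 {K : Type*} [Field K] [CharZero K] (θ : K) (hθ : θ ^ 6 = 37) :
    IsIntegral ℤ ((θ ^ 3 + 1) / 2) := by
  refine ⟨Polynomial.X ^ 2 - Polynomial.X - Polynomial.C 9, by monicity!, ?_⟩
  simp
  linear_combination hθ / 4

lemma isInt_w {K : Type*} [Field K] [CharZero K] (θ : K) (hθ : θ ^ 6 = 37) :
    IsIntegral ℤ ((θ ^ 4 + θ ^ 2 + 1) / 3) := by
  refine ⟨Polynomial.X ^ 3 - Polynomial.X ^ 2 - Polynomial.C 12 * Polynomial.X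
    - Polynomial.C 48, by monicity!, ?_⟩
  simp
  linear_combination (θ ^ 6 + 3 * θ ^ 4 + 3 * θ ^ 2 + 38) / 27 * hθ

lemma isInt_b4 {K : Type*} [Field K] [CharZero K] (θ : K) (hθ : θ ^ 6 = 37) :
    IsIntegral ℤ ((θ ^ 4 - 2 * θ ^ 2 + 3 * θ - 2) / 6) := by
  have := ((isInt_theta θ hθ).mul (isInt_b3 θ hθ)).sub (isInt_w θ hθ)
  refine isInt_of_eq this ?_
  ring

lemma isInt_b5 {K : Type*} [Field K] [CharZero K] (θ : K) (hθ : θ ^ 6 = 37) :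
    IsIntegral ℤ ((θ ^ 5 - 2 * θ ^ 3 + 3 * θ ^ 2 - 2 * θ) / 6) := by
  have := (isInt_theta θ hθ).mul (isInt_b4 θ hθ)
  refine isInt_of_eq this ?_
  ring

lemma strip37 {K : Type*} [Field K] [Algebra ℚ K]
    (θ : K) (hθ : θ ^ 6 = 37) (y : K) (hy : IsIntegral ℤ y) (n0 m1 m2 m3 m4 m5 : ℤ)
    (h : y = n0 + (m1 * θ + m2 * θ ^ 2 + m3 * θ ^ 3 + m4 * θ ^ 4 + m5 * θ ^ 5) / 37) :
    ∃ n1 n2 n3 n4 n5 : ℤ,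
      y = n0 + n1 * θ + n2 * θ ^ 2 + n3 * θ ^ 3 + n4 * θ ^ 4 + n5 * θ ^ 5 := by
  have hK : CharZero K := algebraRat.charZero K
  have ht := isInt_theta θ hθ
  obtain ⟨n1, rfl⟩ := step37 θ hθ m1 (by
    refine isInt_of_eq ((hy.mul (ht.pow 4)).sub (isInt_poly θ hθ m2 m3 m4 m5 n0 0)) ?_
    rw [h]; push_cast; linear_combination
      (-(m2 + m3 * θ + m4 * θ ^ 2 + m5 * θ ^ 3) / 37 : K) * hθ)
  obtain ⟨n2, rfl⟩ := step37 θ hθ m2 (by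
    refine isInt_of_eq ((hy.mul (ht.pow 3)).sub (isInt_poly θ hθ m3 m4 m5 n0 n1 0)) ?_
    rw [h]; push_cast; linear_combination
      (-(m3 + m4 * θ + m5 * θ ^ 2) / 37 : K) * hθ)
  obtain ⟨n3, rfl⟩ := step37 θ hθ m3 (by
    refine isInt_of_eq ((hy.mul (ht.pow 2)).sub (isInt_poly θ hθ m4 m5 n0 n1 n2 0)) ?_
    rw [h]; push_cast; linear_combination
      (-(m4 + m5 * θ) / 37 : K) * hθ)
  obtain ⟨n4, rfl⟩ := step37 θ hθ m4 (by
    refine isInt_of_eq ((hy.mul (ht.pow 1)).sub (isInt_poly θ hθ m5 n0 n1 n2 n3 0)) ?_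
    rw [h]; push_cast; linear_combination
      (-(m5) / 37 : K) * hθ)
  obtain ⟨n5, rfl⟩ := step37 θ hθ m5 (by
    refine isInt_of_eq (hy.sub (isInt_poly θ hθ n0 n1 n2 n3 n4 0)) ?_
    rw [h]; push_cast; ring)
  refine ⟨n1, n2, n3, n4, n5, ?_⟩
  rw [h]; push_cast; ring

lemma sq_add_sq_three (u v : ℤ) (h : (3 : ℤ) ∣ u ^ 2 + v ^ 2) : (3 : ℤ) ∣ u ∧ (3 : ℤ) ∣ v := by
  have key : ∀ a b : ZMod 3, a ^ 2 + b ^ 2 = 0 → a = 0 ∧ b = 0 := by decide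
  have h1 := (ZMod.intCast_zmod_eq_zero_iff_dvd _ 3).mpr h
  push_cast at h1
  have h2 := key _ _ h1
  exact ⟨(ZMod.intCast_zmod_eq_zero_iff_dvd _ 3).mp h2.1,
    (ZMod.intCast_zmod_eq_zero_iff_dvd _ 3).mp h2.2⟩

lemma arith (n0 n1 n2 n3 n4 n5 k1 k2 k3 k4 : ℤ)
    (h1 : 37 * n3 + n0 = 2 * k1)
    (h2 : 37 * n2 - 74 * n4 + 111 * n5 - 2 * n0 = 6 * k2)
    (h3 : 37 * n1 - 74 * n3 + 111 * n4 - 74 * n5 = 6 * k3)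
    (h4 : n0 ^ 2 + 37 * (2 * n1 * n5 + 2 * n2 * n4 + n3 ^ 2) = 6 * k4) :
    ∃ c0 c1 c2 c3 : ℤ, n3 = 3 * c3 - 2 * n5 ∧ n2 = 6 * c2 + 3 * n5 - 2 * n4 ∧
      n1 = 6 * c1 - 2 * n5 + 3 * n4 ∧ n0 = 6 * c0 + 3 * c3 - 2 * n4 := by
  obtain ⟨s, hs⟩ : ∃ s, n0 = -n2 - n4 + 3 * s := ⟨(n0 + n2 + n4) / 3, by clear h4; omega⟩
  obtain ⟨t, ht⟩ : ∃ t, n3 = -n1 - n5 + 3 * t := ⟨(n3 + n1 + n5) / 3, by clear h4; omega⟩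
  have h5 : (3 : ℤ) ∣ (n2 - n4) ^ 2 + (n1 - n5) ^ 2 := by
    refine ⟨2 * k4 - 12 * (2 * n1 * n5 + 2 * n2 * n4 + n3 ^ 2) - 2 * n2 * n4 - 2 * n1 * n5
      + 2 * s * (n2 + n4) - 3 * s ^ 2 + 2 * t * (n1 + n5) - 3 * t ^ 2, ?_⟩
    have e1 : n0 ^ 2 = (-n2 - n4 + 3 * s) ^ 2 := by rw [hs]
    have e2 : n3 ^ 2 = (-n1 - n5 + 3 * t) ^ 2 := by rw [ht]
    linear_combination h4 - e1 - e2
  obtain ⟨h6, h7⟩ := sq_add_sq_three _ _ h5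
  clear h4 h5
  obtain ⟨p, hp⟩ := h6
  obtain ⟨q, hq⟩ := h7
  obtain ⟨c3, hc3⟩ : ∃ c3, n3 = 3 * c3 - 2 * n5 := ⟨t - q, by linarith⟩
  obtain ⟨c2, hc2⟩ : ∃ c2, n2 - n5 = 2 * c2 := ⟨(n2 - n5) / 2, by clear h1 h3 hs ht hp hq hc3; omega⟩
  obtain ⟨c1, hc1⟩ : ∃ c1, n1 - n4 = 2 * c1 := ⟨(n1 - n4) / 2, by clear h1 h2 hs ht hp hq hc3 hc2; omega⟩
  obtain ⟨c0, hc0⟩ : ∃ c0, n0 - n3 = 2 * c0 := ⟨(n0 - n3) / 2, by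
    clear h2 h3 hs ht hp hq hc3 hc2 hc1; omega⟩
  clear h1 h2 h3
  have g2 : ∃ d, n2 = 6 * d + 3 * n5 - 2 * n4 := ⟨(n2 - 3 * n5 + 2 * n4) / 6, by
    clear hs ht hq hc3 hc1 hc0; omega⟩
  have g1 : ∃ d, n1 = 6 * d - 2 * n5 + 3 * n4 := ⟨(n1 + 2 * n5 - 3 * n4) / 6, by
    clear hs ht hp hc3 hc2 hc0; omega⟩
  have g0 : ∃ d, n0 = 6 * d + 3 * c3 - 2 * n4 := by
    refine ⟨(n0 - 3 * c3 + 2 * n4) / 6, ?_⟩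
    have k3 : n0 - 3 * c3 + 2 * n4 = 3 * (s - p - c3) := by linarith
    have k2 : n0 - 3 * c3 + 2 * n4 = 2 * (c0 - n5 + n4) := by linarith
    generalize n0 - 3 * c3 + 2 * n4 = w at *
    omega
  obtain ⟨d2, g2⟩ := g2
  obtain ⟨d1, g1⟩ := g1
  obtain ⟨d0, g0⟩ := g0
  exact ⟨d0, d1, d2, c3, hc3, g2, g1, g0⟩

lemma coords {K : Type*} [Field K] [Algebra ℚ K]
    (θ : K) (hθ : θ ^ 6 = 37) (b : Module.Basis (Fin 6) ℚ K) (hb : ∀ i, b i = θ ^ (i : ℕ))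
    (z : K) (hz : IsIntegral ℤ z) :
    ∃ n0 n1 n2 n3 n4 n5 : ℤ,
      z = (n0 + n1 * θ + n2 * θ ^ 2 + n3 * θ ^ 3 + n4 * θ ^ 4 + n5 * θ ^ 5) / 6 := by
  have hK : CharZero K := algebraRat.charZero K
  have ht := isInt_theta θ hθ
  obtain ⟨a0, a1, a2, a3, a4, a5, h⟩ : ∃ a0 a1 a2 a3 a4 a5 : ℚ,
      z = (a0 : K) + a1 * θ + a2 * θ ^ 2 + a3 * θ ^ 3 + a4 * θ ^ 4 + a5 * θ ^ 5 := by
    refine ⟨b.repr z 0, b.repr z 1, b.repr z 2, b.repr z 3, b.repr z 4, b.repr z 5, ?_⟩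
    have := (b.sum_repr z).symm
    simpa [hb, Fin.sum_univ_six, Algebra.smul_def] using this
  obtain ⟨n0, e0⟩ := trace_int θ hθ b hb z hz a0 a1 a2 a3 a4 a5 h
  obtain ⟨m5, e5⟩ := trace_int θ hθ b hb _ (hz.mul (ht.pow 1)) (37 * a5) a0 a1 a2 a3 a4 (by
    rw [h]; push_cast; linear_combination (a5 : K) * hθ)
  obtain ⟨m4, e4⟩ := trace_int θ hθ b hb _ (hz.mul (ht.pow 2))
    (37 * a4) (37 * a5) a0 a1 a2 a3 (by
    rw [h]; push_cast; linear_combination (a4 + a5 * θ : K) * hθ)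
  obtain ⟨m3, e3⟩ := trace_int θ hθ b hb _ (hz.mul (ht.pow 3))
    (37 * a3) (37 * a4) (37 * a5) a0 a1 a2 (by
    rw [h]; push_cast; linear_combination (a3 + a4 * θ + a5 * θ ^ 2 : K) * hθ)
  obtain ⟨m2, e2⟩ := trace_int θ hθ b hb _ (hz.mul (ht.pow 4))
    (37 * a2) (37 * a3) (37 * a4) (37 * a5) a0 a1 (by
    rw [h]; push_cast; linear_combination (a2 + a3 * θ + a4 * θ ^ 2 + a5 * θ ^ 3 : K) * hθ)
  obtain ⟨m1, e1⟩ := trace_int θ hθ b hb _ (hz.mul (ht.pow 5))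
    (37 * a1) (37 * a2) (37 * a3) (37 * a4) (37 * a5) a0 (by
    rw [h]; push_cast
    linear_combination (a1 + a2 * θ + a3 * θ ^ 2 + a4 * θ ^ 3 + a5 * θ ^ 4 : K) * hθ)
  have cast : ∀ (p : ℚ) (n : ℤ), p = n → (p : K) = n := by
    intro p n hp; rw [hp]; simp
  replace e0 := cast _ _ e0
  replace e1 := cast _ _ e1
  replace e2 := cast _ _ e2
  replace e3 := cast _ _ e3
  replace e4 := cast _ _ e4
  replace e5 := cast _ _ e5
  push_cast at e0 e1 e2 e3 e4 e5
  have h6 : IsIntegral ℤ (6 * z) := by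
    have := (isInt_int (K := K) 6).mul hz
    exact_mod_cast this
  obtain ⟨n1, n2, n3, n4, n5, hn⟩ := strip37 θ hθ (6 * z) h6 n0 m1 m2 m3 m4 m5 (by
    rw [h, ← e0, ← e1, ← e2, ← e3, ← e4, ← e5]; ring)
  exact ⟨n0, n1, n2, n3, n4, n5, by rw [← hn]; ring⟩

lemma coords' {K : Type*} [Field K] [Algebra ℚ K]
    (θ : K) (hθ : θ ^ 6 = 37) (b : Module.Basis (Fin 6) ℚ K) (hb : ∀ i, b i = θ ^ (i : ℕ))
    (z : K) (hz : IsIntegral ℤ z) :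
    ∃ c0 c1 c2 c3 c4 c5 : ℤ,
      z = c0 * 1 + c1 * θ + c2 * θ ^ 2 + c3 * ((θ ^ 3 + 1) / 2)
        + c4 * ((θ ^ 4 - 2 * θ ^ 2 + 3 * θ - 2) / 6)
        + c5 * ((θ ^ 5 - 2 * θ ^ 3 + 3 * θ ^ 2 - 2 * θ) / 6) := by
  have hK : CharZero K := algebraRat.charZero K
  obtain ⟨n0, n1, n2, n3, n4, n5, h⟩ := coords θ hθ b hb z hz
  obtain ⟨k1, e1⟩ := trace_int θ hθ b hb _ (hz.mul (isInt_b3 θ hθ))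
    ((37 * n3 + n0) / 12) ((37 * n4 + n1) / 12) ((37 * n5 + n2) / 12)
    ((n0 + n3) / 12) ((n1 + n4) / 12) ((n2 + n5) / 12) (by
    rw [h]; push_cast
    linear_combination ((n3 + n4 * θ + n5 * θ ^ 2) / 12 : K) * hθ)
  obtain ⟨k2, e2⟩ := trace_int θ hθ b hb _ (hz.mul (isInt_b4 θ hθ))
    ((37 * n2 - 74 * n4 + 111 * n5 - 2 * n0) / 36)
    ((37 * n3 - 74 * n5 + 3 * n0 - 2 * n1) / 36)
    ((37 * n4 - 2 * n0 + 3 * n1 - 2 * n2) / 36)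
    ((37 * n5 - 2 * n1 + 3 * n2 - 2 * n3) / 36)
    ((n0 - 2 * n2 + 3 * n3 - 2 * n4) / 36)
    ((n1 - 2 * n3 + 3 * n4 - 2 * n5) / 36) (by
    rw [h]; push_cast
    linear_combination ((n2 - 2 * n4 + 3 * n5 + (n3 - 2 * n5) * θ + n4 * θ ^ 2
      + n5 * θ ^ 3) / 36 : K) * hθ)
  obtain ⟨k3, e3⟩ := trace_int θ hθ b hb _ (hz.mul (isInt_b5 θ hθ))
    ((37 * n1 - 74 * n3 + 111 * n4 - 74 * n5) / 36)
    ((37 * n2 - 74 * n4 + 111 * n5 - 2 * n0) / 36)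
    ((37 * n3 - 74 * n5 + 3 * n0 - 2 * n1) / 36)
    ((37 * n4 - 2 * n0 + 3 * n1 - 2 * n2) / 36)
    ((37 * n5 - 2 * n1 + 3 * n2 - 2 * n3) / 36)
    ((n0 - 2 * n2 + 3 * n3 - 2 * n4) / 36) (by
    rw [h]; push_cast
    linear_combination ((n1 - 2 * n3 + 3 * n4 - 2 * n5 + (n2 - 2 * n4 + 3 * n5) * θ
      + (n3 - 2 * n5) * θ ^ 2 + n4 * θ ^ 3 + n5 * θ ^ 4) / 36 : K) * hθ)
  obtain ⟨k4, e4⟩ := trace_int θ hθ b hb _ (hz.pow 2)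
    ((n0 ^ 2 + 37 * (2 * n1 * n5 + 2 * n2 * n4 + n3 ^ 2)) / 36)
    ((2 * n0 * n1 + 37 * (2 * n2 * n5 + 2 * n3 * n4)) / 36)
    ((2 * n0 * n2 + n1 ^ 2 + 37 * (2 * n3 * n5 + n4 ^ 2)) / 36)
    ((2 * n0 * n3 + 2 * n1 * n2 + 37 * (2 * n4 * n5)) / 36)
    ((2 * n0 * n4 + 2 * n1 * n3 + n2 ^ 2 + 37 * n5 ^ 2) / 36)
    ((2 * n0 * n5 + 2 * n1 * n4 + 2 * n2 * n3) / 36) (by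
    rw [h]; push_cast
    linear_combination ((2 * n1 * n5 + 2 * n2 * n4 + n3 ^ 2 + (2 * n2 * n5 + 2 * n3 * n4) * θ
      + (2 * n3 * n5 + n4 ^ 2) * θ ^ 2 + 2 * n4 * n5 * θ ^ 3 + n5 ^ 2 * θ ^ 4) / 36 : K) * hθ)
  obtain ⟨c0, c1, c2, c3, f3, f2, f1, f0⟩ := arith n0 n1 n2 n3 n4 n5 k1 k2 k3 k4
    (by have : (37 * n3 + n0 : ℚ) = 2 * k1 := by linear_combination 2 * e1
        exact_mod_cast this)
    (by have : (37 * n2 - 74 * n4 + 111 * n5 - 2 * n0 : ℚ) = 6 * k2 := by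
          linear_combination 6 * e2
        exact_mod_cast this)
    (by have : (37 * n1 - 74 * n3 + 111 * n4 - 74 * n5 : ℚ) = 6 * k3 := by
          linear_combination 6 * e3
        exact_mod_cast this)
    (by have : (n0 ^ 2 + 37 * (2 * n1 * n5 + 2 * n2 * n4 + n3 ^ 2) : ℚ) = 6 * k4 := by
          linear_combination 6 * e4
        exact_mod_cast this)
  refine ⟨c0, c1, c2, c3, n4, n5, ?_⟩
  rw [h, f3, f2, f1, f0]
  push_cast
  ring

open Polynomial in
theorem integral_basis_pure_sextic (K : Type*) [Field K] [Algebra ℚ K]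
    (θ : K) (hθ : θ ^ 6 = 37)
    (hirr : Irreducible ((X : ℚ[X]) ^ 6 - C (37 : ℚ)))
    (hgen : Algebra.adjoin ℚ ({θ} : Set K) = ⊤) :
    LinearIndependent ℤ
        ![(1 : K), θ, θ ^ 2, (θ ^ 3 + 1) / 2,
          (θ ^ 4 - 2 * θ ^ 2 + 3 * θ - 2) / 6,
          (θ ^ 5 - 2 * θ ^ 3 + 3 * θ ^ 2 - 2 * θ) / 6] ∧
      Submodule.span ℤ
          (Set.range ![(1 : K), θ, θ ^ 2, (θ ^ 3 + 1) / 2,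
            (θ ^ 4 - 2 * θ ^ 2 + 3 * θ - 2) / 6,
            (θ ^ 5 - 2 * θ ^ 3 + 3 * θ ^ 2 - 2 * θ) / 6]) =
        Subalgebra.toSubmodule (integralClosure ℤ K) := by
  have hK : CharZero K := algebraRat.charZero K
  obtain ⟨b, hb⟩ := exists_pow_basis K θ hθ hirr hgen
  constructor
  · rw [Fintype.linearIndependent_iff]
    intro g hg
    simp only [Fin.sum_univ_six, zsmul_eq_mul] at hg
    simp at hg
    have hli := Fintype.linearIndependent_iff.mp b.linearIndependent
      ![(g 0 + g 3 / 2 - g 4 / 3 : ℚ), g 1 + g 4 / 2 - g 5 / 3, g 2 - g 4 / 3 + g 5 / 2,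
        g 3 / 2 - g 5 / 3, g 4 / 6, g 5 / 6] (by
        simp [hb, Fin.sum_univ_six, Algebra.smul_def]
        push_cast
        linear_combination hg)
    have l0 := hli 0
    have l1 := hli 1
    have l2 := hli 2
    have l3 := hli 3
    have l4 := hli 4
    have l5 := hli 5
    simp at l0 l1 l2 l3 l4 l5
    simp [l4, l5] at l0 l1 l2 l3
    simp [l3] at l0
    intro i
    fin_cases i <;> simp [*]
  · apply le_antisymm
    · rw [Submodule.span_le]
      rintro _ ⟨i, rfl⟩
      change IsIntegral ℤ _
      have ht := isInt_theta θ hθ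
      fin_cases i
      · exact isIntegral_one
      · exact ht
      · exact ht.pow 2
      · exact isInt_b3 θ hθ
      · exact isInt_b4 θ hθ
      · exact isInt_b5 θ hθ
    · intro z hz
      obtain ⟨c0, c1, c2, c3, c4, c5, h⟩ := coords' θ hθ b hb z hz
      rw [Submodule.mem_span_range_iff_exists_fun]
      refine ⟨![c0, c1, c2, c3, c4, c5], ?_⟩
      rw [h]
      simp [Fin.sum_univ_six]
end
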